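/- Let M, k, l_n be positive integers, let β = γ > 0, let E : ℝ^M → ℝ be twice continuously differentiable with F(x) = −∇E(x) and H(x) = ∇²E(x), and let v̄_1, …, v̄_{l_n} ∈ ℝ^M be a fixed orthonormal family. Suppose φ : [0,∞) → ℝ^M and v_1, …, v_k : [0,∞) → ℝ^M are continuously differentiable and satisfy, for all t ≥ 0, the sphere-constrained nullspace-preserving high-index saddle dynamics: φ'(t) = β ( F(φ(t)) − ⟨φ(t), F(φ(t))⟩ φ(t) − 2 Σ_{j=1}^k ⟨v_j(t), F(φ(t))⟩ v_j(t) − Σ_{l=1}^{l_n} ⟨v̄_l, F(φ(t))⟩ v̄_l ) and, for each 1 ≤ i ≤ k, v_i'(t) = γ ( H(φ(t)) v_i(t) − ⟨φ(t), H(φ(t)) v_i(t)⟩ φ(t) − ⟨v_i(t), H(φ(t)) v_i(t)⟩ v_i(t) − 2 Σ_{j=1}^{i−1} ⟨v_j(t), H(φ(t)) v_i(t)⟩ v_j(t) − Σ_{l=1}^{l_n} ⟨v̄_l, H(φ(t)) v_i(t)⟩ v̄_l + ⟨v_i(t), F(φ(t))⟩ φ(t) ). If the initial values satisfy ‖φ(0)‖₂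 = 1, ⟨φ(0), v_i(0)⟩ = 0, ⟨v_i(0), v_j(0)⟩ = δ_{ij}, ⟨φ(0), v̄_l⟩ = 0 and ⟨v_i(0), v̄_l⟩ = 0 for all 1 ≤ i, j ≤ k and 1 ≤ l ≤ l_n, then for every t ≥ 0 one has ‖φ(t)‖₂ = 1, ⟨φ(t), v_i(t)⟩ = 0, ⟨v_i(t), v_j(t)⟩ = δ_{ij}, ⟨φ(t), v̄_l⟩ = 0 and ⟨v_i(t), v̄_l⟩ = 0 for all 1 ≤ i, j ≤ k and 1 ≤ l ≤ l_n. -/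

import Mathlib

open scoped RealInnerProductSpace BigOperators

open Filter Asymptotics in
lemma gron_zero {E : Type*} [NormedAddCommGroup E] [NormedSpace ℝ E] (f f' : ℝ → E)
    (hd : ∀ t ≥ (0:ℝ), HasDerivWithinAt f (f' t) (Set.Ici 0) t) (h0 : f 0 = 0)
    (hO : ∀ T : ℝ, f' =O[𝓟 (Set.Icc 0 T)] f) : ∀ t ≥ (0:ℝ), f t = 0 := by
  intro T hT
  obtain ⟨K, hK⟩ := (hO T).bound
  rw [eventually_principal] at hK
  have := norm_le_gronwallBound_of_norm_deriv_right_le (f := f) (f' := f') (δ := 0) (K := K) (ε := 0)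
    (a := 0) (b := T)
    (fun t ht => (hd t ht.1).continuousWithinAt.mono (fun x hx => hx.1))
    (fun t ht => (hd t ht.1).mono (fun x hx => le_trans ht.1 hx))
    (by simp [h0]) (fun t ht => by simpa using hK t ⟨ht.1, ht.2.le⟩) T ⟨hT, le_refl _⟩
  simpa [gronwallBound_ε0_δ0] using this

open Filter Asymptotics in
lemma bigO_cont_mul {E : Type*} [NormedAddCommGroup E] {T : ℝ} {g y : ℝ → ℝ} {Y : ℝ → E}
    (hg : ContinuousOn g (Set.Icc 0 T)) (hy : y =O[𝓟 (Set.Icc 0 T)] Y) :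
    (fun t => g t * y t) =O[𝓟 (Set.Icc 0 T)] Y := by
  obtain ⟨C, hC⟩ := isCompact_Icc.exists_bound_of_continuousOn hg
  have h1 : g =O[𝓟 (Set.Icc 0 T)] (fun _ => (1:ℝ)) := by
    refine IsBigO.of_bound C ?_
    rw [eventually_principal]
    intro t ht
    simpa using hC t ht
  have := (h1.mul hy.norm_right)
  simpa using this

lemma grad_contDiff {M : ℕ} {En : EuclideanSpace ℝ (Fin M) → ℝ} (hEn : ContDiff ℝ 2 En) :
    ContDiff ℝ 1 (gradient En) := by
  have h : ContDiff ℝ 1 (fderiv ℝ En) := hEn.fderiv_right (by norm_num)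
  exact (InnerProductSpace.toDual ℝ (EuclideanSpace ℝ (Fin M))).symm.toContinuousLinearEquiv.contDiff.comp h

lemma hess_symm {M : ℕ} {En : EuclideanSpace ℝ (Fin M) → ℝ} (hEn : ContDiff ℝ 2 En)
    (x u w : EuclideanSpace ℝ (Fin M)) :
    ⟪fderiv ℝ (gradient En) x u, w⟫ = ⟪fderiv ℝ (gradient En) x w, u⟫ := by
  have hd : DifferentiableAt ℝ (gradient En) x :=
    (grad_contDiff hEn).contDiffAt.differentiableAt (by norm_num)
  have hd2 : DifferentiableAt ℝ (fderiv ℝ En) x :=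
    (hEn.fderiv_right (m := 1) (by norm_num)).contDiffAt.differentiableAt (by norm_num)
  have hs : IsSymmSndFDerivAt ℝ En x := hEn.contDiffAt.isSymmSndFDerivAt (by simp)
  have key : ∀ a b, ⟪fderiv ℝ (gradient En) x a, b⟫ = fderiv ℝ (fderiv ℝ En) x a b := by
    intro a b
    have e1 : (fun y => ⟪gradient En y, b⟫) = fun y => fderiv ℝ En y b := by
      funext y
      simp [gradient]
    have h1 : HasFDerivAt (fun y => ⟪gradient En y, b⟫) _ x :=
      hd.hasFDerivAt.inner ℝ (hasFDerivAt_const b x)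
    have h2 : HasFDerivAt (fun y => fderiv ℝ En y b) _ x :=
      hd2.hasFDerivAt.clm_apply (hasFDerivAt_const b x)
    rw [e1] at h1
    have := congrArg (fun L => L a) (h1.unique h2)
    simpa using this
  rw [key, key]
  exact hs u w

open Asymptotics

/-- Structure preservation of the sphere-constrained nullspace-preserving
high-index saddle dynamics: the unit-sphere constraint, orthogonality of `φ`
to the ascent directions and to the fixed nullspace basis, orthonormality of
the ascent directions, and their orthogonality to the nullspace basis are all
preserved in time. -/
theorem nphisd_sphere_constrained_structure_preservation
    (M k ln : ℕ) (hM : 0 < M) (hk : 0 < k) (hln : 0 < ln)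
    (β γ : ℝ) (hβ : 0 < β) (hβγ : β = γ)
    (En : EuclideanSpace ℝ (Fin M) → ℝ) (hEn : ContDiff ℝ 2 En)
    (F : EuclideanSpace ℝ (Fin M) → EuclideanSpace ℝ (Fin M))
    (hF : ∀ x, F x = -gradient En x)
    (H : EuclideanSpace ℝ (Fin M) → EuclideanSpace ℝ (Fin M) →L[ℝ] EuclideanSpace ℝ (Fin M))
    (hH : ∀ x, H x = fderiv ℝ (gradient En) x)
    (vbar : Fin ln → EuclideanSpace ℝ (Fin M)) (hvbar : Orthonormal ℝ vbar)
    (φ : ℝ → EuclideanSpace ℝ (Fin M)) (v : Fin k → ℝ → EuclideanSpace ℝ (Fin M))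
    (hφ : ∀ t ≥ (0:ℝ), HasDerivWithinAt φ
      (β • (F (φ t) - ⟪φ t, F (φ t)⟫ • φ t - (2:ℝ) • ∑ j, ⟪v j t, F (φ t)⟫ • v j t
        - ∑ l, ⟪vbar l, F (φ t)⟫ • vbar l)) (Set.Ici 0) t)
    (hv : ∀ t ≥ (0:ℝ), ∀ i : Fin k, HasDerivWithinAt (v i)
      (γ • ((H (φ t)) (v i t) - ⟪φ t, (H (φ t)) (v i t)⟫ • φ t
        - ⟪v i t, (H (φ t)) (v i t)⟫ • v i t
        - (2:ℝ) • ∑ j ∈ Finset.univ.filter (fun j => j < i),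
            ⟪v j t, (H (φ t)) (v i t)⟫ • v j t
        - ∑ l, ⟪vbar l, (H (φ t)) (v i t)⟫ • vbar l
        + ⟪v i t, F (φ t)⟫ • φ t)) (Set.Ici 0) t)
    (hinit0 : ‖φ 0‖ = 1)
    (hinit1 : ∀ i : Fin k, ⟪φ 0, v i 0⟫ = 0)
    (hinit2 : ∀ i j : Fin k, ⟪v i 0, v j 0⟫ = if i = j then 1 else 0)
    (hinit3 : ∀ l : Fin ln, ⟪φ 0, vbar l⟫ = 0)
    (hinit4 : ∀ (i : Fin k) (l : Fin ln), ⟪v i 0, vbar l⟫ = 0) :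
    ∀ t ≥ (0:ℝ),
      ‖φ t‖ = 1
      ∧ (∀ i : Fin k, ⟪φ t, v i t⟫ = 0)
      ∧ (∀ i j : Fin k, ⟪v i t, v j t⟫ = if i = j then 1 else 0)
      ∧ (∀ l : Fin ln, ⟪φ t, vbar l⟫ = 0)
      ∧ (∀ (i : Fin k) (l : Fin ln), ⟪v i t, vbar l⟫ = 0) := by
  subst hβγ
  have hFc : Continuous F := by
    have : F = fun x => -gradient En x := funext hF
    rw [this]; exact (grad_contDiff hEn).continuous.neg
  have hHc : Continuous H := by
    have : H = fderiv ℝ (gradient En) := funext hH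
    rw [this]; exact (grad_contDiff hEn).continuous_fderiv (by norm_num)
  have hsym : ∀ x u w, ⟪H x u, w⟫ = ⟪H x w, u⟫ := by
    intro x u w; rw [hH]; exact hess_symm hEn x u w
  have hφc : ContinuousOn φ (Set.Ici 0) := fun t ht => (hφ t ht).continuousWithinAt
  have hvc : ∀ i, ContinuousOn (v i) (Set.Ici 0) := fun i t ht => (hv t ht i).continuousWithinAt
  have hfc : ContinuousOn (fun t => F (φ t)) (Set.Ici 0) := hFc.comp_continuousOn hφc
  have hhc : ∀ i, ContinuousOn (fun t => H (φ t) (v i t)) (Set.Ici 0) := fun i =>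
    (hHc.comp_continuousOn hφc).clm_apply (hvc i)
  obtain ⟨f, hf⟩ : ∃ f : ℝ → EuclideanSpace ℝ (Fin M), f = fun t => F (φ t) := ⟨_, rfl⟩
  obtain ⟨h, hh⟩ : ∃ h : Fin k → ℝ → EuclideanSpace ℝ (Fin M), h = fun i t => H (φ t) (v i t) :=
    ⟨_, rfl⟩
  have hsym' : ∀ i j t, ⟪h i t, v j t⟫ = ⟪h j t, v i t⟫ := by
    intro i j t; rw [hh]; exact hsym _ _ _
  have hfc' : ContinuousOn f (Set.Ici 0) := by rw [hf]; exact hfc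
  have hhc' : ∀ i, ContinuousOn (h i) (Set.Ici 0) := by rw [hh]; exact hhc
  obtain ⟨Φ, hΦ⟩ : ∃ Φ : ℝ → EuclideanSpace ℝ (Fin M), Φ = fun t =>
      β • (f t - ⟪φ t, f t⟫ • φ t - (2:ℝ) • ∑ j, ⟪v j t, f t⟫ • v j t
        - ∑ l, ⟪vbar l, f t⟫ • vbar l) := ⟨_, rfl⟩
  obtain ⟨V, hV⟩ : ∃ V : Fin k → ℝ → EuclideanSpace ℝ (Fin M), V = fun i t =>
      β • (h i t - ⟪φ t, h i t⟫ • φ t - ⟪v i t, h i t⟫ • v i t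
        - (2:ℝ) • ∑ j ∈ Finset.univ.filter (fun j => j < i), ⟪v j t, h i t⟫ • v j t
        - ∑ l, ⟪vbar l, h i t⟫ • vbar l + ⟪v i t, f t⟫ • φ t) := ⟨_, rfl⟩
  have dφ : ∀ t ≥ (0:ℝ), HasDerivWithinAt φ (Φ t) (Set.Ici 0) t := by
    intro t ht; rw [hΦ, hf]; exact hφ t ht
  have dv : ∀ t ≥ (0:ℝ), ∀ i, HasDerivWithinAt (v i) (V i t) (Set.Ici 0) t := by
    intro t ht i; rw [hV, hf, hh]; exact hv t ht i
  have hw : ∀ l m, ⟪vbar l, vbar m⟫ = if l = m then (1:ℝ) else 0 :=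
    orthonormal_iff_ite.mp hvbar
  -- expansions of inner products
  have eΦ : ∀ t x, ⟪Φ t, x⟫ = β * (⟪f t, x⟫ - ⟪φ t, f t⟫ * ⟪φ t, x⟫
      - 2 * ∑ j, ⟪v j t, f t⟫ * ⟪v j t, x⟫ - ∑ l, ⟪vbar l, f t⟫ * ⟪vbar l, x⟫) := by
    intro t x
    simp only [hΦ, inner_sub_left, real_inner_smul_left, sum_inner]
  have eV : ∀ i t x, ⟪V i t, x⟫ = β * (⟪h i t, x⟫ - ⟪φ t, h i t⟫ * ⟪φ t, x⟫
      - ⟪v i t, h i t⟫ * ⟪v i t, x⟫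
      - 2 * ∑ j ∈ Finset.univ.filter (fun j => j < i), ⟪v j t, h i t⟫ * ⟪v j t, x⟫
      - ∑ l, ⟪vbar l, h i t⟫ * ⟪vbar l, x⟫ + ⟪v i t, f t⟫ * ⟪φ t, x⟫) := by
    intro i t x
    simp only [hV, inner_sub_left, inner_add_left, real_inner_smul_left, sum_inner]
  let Y : ℝ → ℝ × (Fin k → ℝ) × (Fin k → Fin k → ℝ) × (Fin ln → ℝ) × (Fin k → Fin ln → ℝ) :=
    fun t => (⟪φ t, φ t⟫ - 1, fun i => ⟪φ t, v i t⟫,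
      fun i j => ⟪v i t, v j t⟫ - (if i = j then 1 else 0),
      fun l => ⟪φ t, vbar l⟫, fun i l => ⟪v i t, vbar l⟫)
  let Y' : ℝ → ℝ × (Fin k → ℝ) × (Fin k → Fin k → ℝ) × (Fin ln → ℝ) × (Fin k → Fin ln → ℝ) :=
    fun t => (⟪φ t, Φ t⟫ + ⟪Φ t, φ t⟫, fun i => ⟪φ t, V i t⟫ + ⟪Φ t, v i t⟫,
      fun i j => ⟪v i t, V j t⟫ + ⟪V i t, v j t⟫,
      fun l => ⟪Φ t, vbar l⟫, fun i l => ⟪V i t, vbar l⟫)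
  have main : ∀ t ≥ (0:ℝ), Y t = 0 := by
    refine gron_zero Y Y' ?_ ?_ ?_
    · intro t ht
      have c : ∀ l, HasDerivWithinAt (fun _ : ℝ => vbar l) 0 (Set.Ici 0) t :=
        fun l => hasDerivWithinAt_const _ _ _
      refine HasDerivWithinAt.prodMk ?_ (HasDerivWithinAt.prodMk ?_ (HasDerivWithinAt.prodMk ?_
        (HasDerivWithinAt.prodMk ?_ ?_)))
      · exact ((dφ t ht).inner ℝ (dφ t ht)).sub_const _
      · rw [hasDerivWithinAt_pi]; intro i
        exact (dφ t ht).inner ℝ (dv t ht i)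
      · rw [hasDerivWithinAt_pi]; intro i
        rw [hasDerivWithinAt_pi]; intro j
        exact ((dv t ht i).inner ℝ (dv t ht j)).sub_const _
      · rw [hasDerivWithinAt_pi]; intro l
        simpa using (dφ t ht).inner ℝ (c l)
      · rw [hasDerivWithinAt_pi]; intro i
        rw [hasDerivWithinAt_pi]; intro l
        simpa using (dv t ht i).inner ℝ (c l)
    · have : ⟪φ 0, φ 0⟫ = 1 := by rw [real_inner_self_eq_norm_sq, hinit0]; norm_num
      simp only [Y, this, hinit1, hinit2, hinit3, hinit4, sub_self]
      rfl
    · intro T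
      have hsub : Set.Icc 0 T ⊆ Set.Ici (0:ℝ) := fun x hx => hx.1
      have Cφ := hφc.mono hsub
      have Cv := fun i => (hvc i).mono hsub
      have Cf := hfc'.mono hsub
      have Ch := fun i => (hhc' i).mono hsub
      have Cw : ∀ l, ContinuousOn (fun _ : ℝ => vbar l) (Set.Icc 0 T) :=
        fun l => continuousOn_const
      have O0 : Y =O[Filter.principal (Set.Icc 0 T)] Y := Asymptotics.isBigO_refl _ _
      have Oa : (fun t => ⟪φ t, φ t⟫ - 1) =O[Filter.principal (Set.Icc 0 T)] Y := (Asymptotics.isBigO_prod_left.1 O0).1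
      have O1 := (Asymptotics.isBigO_prod_left.1 O0).2
      have Ob : ∀ i, (fun t => ⟪φ t, v i t⟫) =O[Filter.principal (Set.Icc 0 T)] Y :=
        Asymptotics.isBigO_pi.1 (Asymptotics.isBigO_prod_left.1 O1).1
      have O2 := (Asymptotics.isBigO_prod_left.1 O1).2
      have Oc : ∀ i j, (fun t => ⟪v i t, v j t⟫ - (if i = j then 1 else 0))
          =O[Filter.principal (Set.Icc 0 T)] Y :=
        fun i => Asymptotics.isBigO_pi.1 (Asymptotics.isBigO_pi.1 (Asymptotics.isBigO_prod_left.1 O2).1 i)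
      have O3 := (Asymptotics.isBigO_prod_left.1 O2).2
      have Od : ∀ l, (fun t => ⟪φ t, vbar l⟫) =O[Filter.principal (Set.Icc 0 T)] Y :=
        Asymptotics.isBigO_pi.1 (Asymptotics.isBigO_prod_left.1 O3).1
      have Oe : ∀ i l, (fun t => ⟪v i t, vbar l⟫) =O[Filter.principal (Set.Icc 0 T)] Y :=
        fun i => Asymptotics.isBigO_pi.1 (Asymptotics.isBigO_pi.1 (Asymptotics.isBigO_prod_left.1 O3).2 i)
      have Ob' : ∀ i, (fun t => ⟪v i t, φ t⟫) =O[Filter.principal (Set.Icc 0 T)] Y := fun i =>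
        (Ob i).congr_left fun t => real_inner_comm _ _
      have Od' : ∀ l, (fun t => ⟪vbar l, φ t⟫) =O[Filter.principal (Set.Icc 0 T)] Y := fun i =>
        (Od i).congr_left fun t => real_inner_comm _ _
      have Oe' : ∀ i l, (fun t => ⟪vbar l, v i t⟫) =O[Filter.principal (Set.Icc 0 T)] Y := fun i l =>
        (Oe i l).congr_left fun t => real_inner_comm _ _
      clear_value Y
      -- the field of φ
      have S1 : (fun t => ⟪Φ t, φ t⟫) =O[Filter.principal (Set.Icc 0 T)] Y := by
        have := (((bigO_cont_mul (Cφ.inner Cf) Oa).neg_left.sub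
          ((Asymptotics.IsBigO.sum (s := Finset.univ) fun j _ =>
            bigO_cont_mul ((Cv j).inner Cf) (Ob' j)).const_mul_left 2)).sub
          (Asymptotics.IsBigO.sum (s := Finset.univ) fun l _ =>
            bigO_cont_mul ((Cw l).inner Cf) (Od' l))).const_mul_left β
        refine this.congr_left fun t => ?_
        rw [eΦ, real_inner_comm (φ t) (f t)]
        simp only [Finset.sum_apply]
        ring
      have S2 : ∀ i, (fun t => ⟪Φ t, v i t⟫ + β * ⟪v i t, f t⟫) =O[Filter.principal (Set.Icc 0 T)] Y := by
        intro i
        have := (((bigO_cont_mul (Cφ.inner Cf) (Ob i)).neg_left.sub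
          ((Asymptotics.IsBigO.sum (s := Finset.univ) fun j _ =>
            bigO_cont_mul ((Cv j).inner Cf) (Oc j i)).const_mul_left 2)).sub
          (Asymptotics.IsBigO.sum (s := Finset.univ) fun l _ =>
            bigO_cont_mul ((Cw l).inner Cf) (Oe' i l))).const_mul_left β
        refine this.congr_left fun t => ?_
        rw [eΦ, real_inner_comm (v i t) (f t)]
        simp only [Finset.sum_apply]
        simp only [mul_sub, Finset.sum_sub_distrib, mul_ite, mul_one, mul_zero,
          Finset.sum_ite_eq', Finset.mem_univ, if_true]
        ring
      have S3 : ∀ m, (fun t => ⟪Φ t, vbar m⟫) =O[Filter.principal (Set.Icc 0 T)] Y := by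
        intro m
        have := ((bigO_cont_mul (Cφ.inner Cf) (Od m)).neg_left.sub
          ((Asymptotics.IsBigO.sum (s := Finset.univ) fun j _ =>
            bigO_cont_mul ((Cv j).inner Cf) (Oe j m)).const_mul_left 2)).const_mul_left β
        refine this.congr_left fun t => ?_
        rw [eΦ, real_inner_comm (vbar m) (f t)]
        simp only [Finset.sum_apply]
        simp only [hw, mul_ite, mul_one, mul_zero,
          Finset.sum_ite_eq', Finset.mem_univ, if_true]
        ring
      -- the fields of the v i
      have S4 : ∀ i, (fun t => ⟪V i t, φ t⟫ - β * ⟪v i t, f t⟫) =O[Filter.principal (Set.Icc 0 T)] Y := by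
        intro i
        have := (((((bigO_cont_mul (Cφ.inner (Ch i)) Oa).neg_left.sub
          (bigO_cont_mul ((Cv i).inner (Ch i)) (Ob' i))).sub
          ((Asymptotics.IsBigO.sum (s := Finset.univ.filter (fun j => j < i)) fun j _ =>
            bigO_cont_mul ((Cv j).inner (Ch i)) (Ob' j)).const_mul_left 2)).sub
          (Asymptotics.IsBigO.sum (s := Finset.univ) fun l _ =>
            bigO_cont_mul ((Cw l).inner (Ch i)) (Od' l))).add
          (bigO_cont_mul ((Cv i).inner Cf) Oa)).const_mul_left β
        refine this.congr_left fun t => ?_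
        rw [eV, real_inner_comm (φ t) (h i t)]
        simp only [Finset.sum_apply]
        ring
      have S5 : ∀ i n, (fun t => ⟪V i t, v n t⟫ - β * ((1 - (if i = n then 1 else 0)
          - 2 * (if n < i then 1 else 0)) * ⟪v n t, h i t⟫)) =O[Filter.principal (Set.Icc 0 T)] Y := by
        intro i n
        have := (((((bigO_cont_mul (Cφ.inner (Ch i)) (Ob n)).neg_left.sub
          (bigO_cont_mul ((Cv i).inner (Ch i)) (Oc i n))).sub
          ((Asymptotics.IsBigO.sum (s := Finset.univ.filter (fun j => j < i)) fun j _ =>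
            bigO_cont_mul ((Cv j).inner (Ch i)) (Oc j n)).const_mul_left 2)).sub
          (Asymptotics.IsBigO.sum (s := Finset.univ) fun l _ =>
            bigO_cont_mul ((Cw l).inner (Ch i)) (Oe' n l))).add
          (bigO_cont_mul ((Cv i).inner Cf) (Ob n))).const_mul_left β
        refine this.congr_left fun t => ?_
        rw [eV, real_inner_comm (v n t) (h i t)]
        simp only [Finset.sum_apply]
        simp only [mul_sub, Finset.sum_sub_distrib, mul_ite, mul_one, mul_zero,
          Finset.sum_ite_eq', Finset.mem_filter, Finset.mem_univ, true_and]
        by_cases hin : i = n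
        · subst hin
          simp only [if_true, lt_irrefl, if_false]
          ring
        · simp only [hin, if_false]
          split_ifs <;> ring
      have S6 : ∀ i m, (fun t => ⟪V i t, vbar m⟫) =O[Filter.principal (Set.Icc 0 T)] Y := by
        intro i m
        have := ((((bigO_cont_mul (Cφ.inner (Ch i)) (Od m)).neg_left.sub
          (bigO_cont_mul ((Cv i).inner (Ch i)) (Oe i m))).sub
          ((Asymptotics.IsBigO.sum (s := Finset.univ.filter (fun j => j < i)) fun j _ =>
            bigO_cont_mul ((Cv j).inner (Ch i)) (Oe j m)).const_mul_left 2)).add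
          (bigO_cont_mul ((Cv i).inner Cf) (Od m))).const_mul_left β
        refine this.congr_left fun t => ?_
        rw [eV, real_inner_comm (vbar m) (h i t)]
        simp only [Finset.sum_apply]
        simp only [hw, mul_ite, mul_one, mul_zero,
          Finset.sum_ite_eq', Finset.mem_univ, if_true]
        ring
      refine Asymptotics.isBigO_prod_left.2 ⟨?_, Asymptotics.isBigO_prod_left.2 ⟨?_, Asymptotics.isBigO_prod_left.2 ⟨?_,
        Asymptotics.isBigO_prod_left.2 ⟨?_, ?_⟩⟩⟩⟩
      · refine (S1.add S1).congr_left fun t => ?_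
        rw [real_inner_comm (φ t) (Φ t)]
      · refine Asymptotics.isBigO_pi.2 fun i => ((S4 i).add (S2 i)).congr_left fun t => ?_
        rw [real_inner_comm (φ t) (V i t)]
        ring
      · refine Asymptotics.isBigO_pi.2 fun i => Asymptotics.isBigO_pi.2 fun j =>
          ((S5 j i).add (S5 i j)).congr_left fun t => ?_
        have e := hsym' i j t
        rw [real_inner_comm (v i t) (V j t), real_inner_comm (h j t) (v i t),
          real_inner_comm (h i t) (v j t), e]
        rcases lt_trichotomy i j with hij | hij | hij
        · simp only [hij, hij.ne, hij.ne', hij.not_gt, if_true, if_false]; ring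
        · subst hij
          simp only [lt_irrefl, if_true, if_false]; ring
        · simp only [hij, hij.ne, hij.ne', hij.not_gt, if_true, if_false]; ring
      · exact Asymptotics.isBigO_pi.2 fun l => S3 l
      · exact Asymptotics.isBigO_pi.2 fun i => Asymptotics.isBigO_pi.2 fun l => S6 i l
  intro t ht
  have hY := main t ht
  simp only [Y, Prod.mk_eq_zero] at hY
  obtain ⟨h1, h2, h3, h4, h5⟩ := hY
  refine ⟨?_, fun i => congrFun h2 i, fun i j => ?_, fun l => congrFun h4 l,
    fun i l => congrFun (congrFun h5 i) l⟩
  · rw [real_inner_self_eq_norm_sq] at h1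
    have h0 := norm_nonneg (φ t)
    nlinarith
  · have := congrFun (congrFun h3 i) j
    exact sub_eq_zero.1 this
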